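/- arXiv:1606.04970 — 4 statements merged into one kernel-verified Lean document; each statement's English description precedes it below -/
import Mathlib

section
/- Assume p(p+1)/2 > m, that the SDP feasible set 𝒞 is compact, and that for every Y ∈ ℳ the matrices A_1 Y, ..., A_m Y are linearly independent in ℝ^{n×p}. Then the set of symmetric cost matrices C for which there exists a second-order critical point Y of the factorized problem that is not globally optimal (i.e., with Tr(C Y Yᵀ) > inf{Tr(C X) : X ∈ 𝒞}) is a null set of symmetric matrices. Consequently, for all C outside this null set, every second-order critical point Y satisfies Tr(C Y Yᵀ) ≤ Tr(C X) for all X ∈ 𝒞, so X = Y Yᵀ is globally optimal for the SDP and Y is globally optimal for the factorized problem. -/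
open Matrix MeasureTheory

noncomputable section

/-- Frobenius inner product `⟨A, B⟩ = Tr(Aᵀ B)`. -/
def frobInner {n p : ℕ} (A B : Matrix (Fin n) (Fin p) ℝ) : ℝ := (Aᵀ * B).trace

/-- Frobenius norm. -/
def frobNorm {n p : ℕ} (A : Matrix (Fin n) (Fin p) ℝ) : ℝ := Real.sqrt (frobInner A A)

/-- The constraint map 𝒜, `𝒜(X) i = Tr(A i * X)`. -/
def Aop {n m : ℕ} (A : Fin m → Matrix (Fin n) (Fin n) ℝ) (X : Matrix (Fin n) (Fin n) ℝ) :
    Fin m → ℝ := fun i => (A i * X).trace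

/-- The adjoint 𝒜*, `𝒜*(μ) = ∑ i, μ i • A i`. -/
def Aadj {n m : ℕ} (A : Fin m → Matrix (Fin n) (Fin n) ℝ) (μ : Fin m → ℝ) :
    Matrix (Fin n) (Fin n) ℝ := ∑ i, μ i • A i

/-- The SDP feasible set 𝒞. -/
def sdpFeas {n m : ℕ} (A : Fin m → Matrix (Fin n) (Fin n) ℝ) (b : Fin m → ℝ) :
    Set (Matrix (Fin n) (Fin n) ℝ) := {X | X.IsSymm ∧ Aop A X = b ∧ X.PosSemidef}

/-- Optimal value `f* = inf {Tr(C X) : X ∈ 𝒞}` of the SDP. -/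
def fstar {n m : ℕ} (A : Fin m → Matrix (Fin n) (Fin n) ℝ) (b : Fin m → ℝ)
    (C : Matrix (Fin n) (Fin n) ℝ) : ℝ := sInf ((fun X => (C * X).trace) '' sdpFeas A b)

/-- The factorized feasible set `ℳ_p = {Y : 𝒜(Y Yᵀ) = b}`. -/
def facFeas {n m : ℕ} (A : Fin m → Matrix (Fin n) (Fin n) ℝ) (b : Fin m → ℝ) (p : ℕ) :
    Set (Matrix (Fin n) (Fin p) ℝ) := {Y | Aop A (Y * Yᵀ) = b}

/-- Tangent space `T_Yℳ = {Ydot : 𝒜(Ydot Yᵀ + Y Ydotᵀ) = 0}`. -/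
def tangentSet {n m p : ℕ} (A : Fin m → Matrix (Fin n) (Fin n) ℝ)
    (Y : Matrix (Fin n) (Fin p) ℝ) : Set (Matrix (Fin n) (Fin p) ℝ) :=
  {Ydot | Aop A (Ydot * Yᵀ + Y * Ydotᵀ) = 0}

/-- Second-order critical point of the factorized problem. -/
def IsSOCP {n m p : ℕ} (A : Fin m → Matrix (Fin n) (Fin n) ℝ) (b : Fin m → ℝ)
    (C : Matrix (Fin n) (Fin n) ℝ) (Y : Matrix (Fin n) (Fin p) ℝ) : Prop :=
  Y ∈ facFeas A b p ∧ ∃ μ : Fin m → ℝ,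
    (C - Aadj A μ) * Y = 0 ∧
    ∀ Ydot ∈ tangentSet A Y, 0 ≤ frobInner Ydot ((C - Aadj A μ) * Ydot)

/-- The real vector space of symmetric `n × n` matrices. -/
def symmSpace (n : ℕ) : Submodule ℝ (Matrix (Fin n) (Fin n) ℝ) where
  carrier := {X | X.IsSymm}
  add_mem' := fun ha hb => ha.add hb
  zero_mem' := Matrix.isSymm_zero
  smul_mem' := fun c X hX => by
    show (c • X)ᵀ = c • X
    rw [Matrix.transpose_smul, hX]

instance (n : ℕ) : MeasurableSpace ↥(symmSpace n) := borel _

/-- A set of symmetric matrices is null if it has measure zero for every additive Haar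
measure on the finite-dimensional real vector space of symmetric `n × n` matrices. -/
def IsNullSymmSet (n : ℕ) (S : Set (Matrix (Fin n) (Fin n) ℝ)) : Prop :=
  ∀ μ : Measure ↥(symmSpace n), μ.IsAddHaarMeasure →
    μ {C : ↥(symmSpace n) | (C : Matrix (Fin n) (Fin n) ℝ) ∈ S} = 0

/-!
At a second-order critical point `Y` the slack matrix `S = C - 𝒜*(μ)` annihilates the columns of
`Y`. If `Y` has a nonzero kernel vector `z`, every `x zᵀ` is tangent at `Y`, and the second-order
condition along these directions says that `S` is positive semidefinite; weak duality then makes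
`Y Yᵀ` optimal. If `Y` has full column rank `p`, then `C` is the sum of a symmetric matrix whose
kernel has dimension at least `p` and of an element of the span of the `A i`. Such sums are a smooth
image of a space of dimension `n (n + 1) / 2 - p (p + 1) / 2 + m`, which is smaller than that of the
symmetric matrices, so they form a null set.
-/

theorem addHaar_preimage_range_eq_zero_of_finrank_lt {E F : Type*}
    [NormedAddCommGroup E] [NormedSpace ℝ E] [FiniteDimensional ℝ E]
    [NormedAddCommGroup F] [NormedSpace ℝ F] (V : Submodule ℝ F) [FiniteDimensional ℝ V]
    [MeasurableSpace V] [hV : BorelSpace V] (μ : Measure V) [hμ : μ.IsAddHaarMeasure]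
    {f : E → F} (hf : ContDiff ℝ 1 f) (h : Module.finrank ℝ E < Module.finrank ℝ V) :
    μ ((↑) ⁻¹' Set.range f : Set V) = 0 := by
  have hdim : dimH ((↑) ⁻¹' Set.range f : Set V) < (Module.finrank ℝ V : NNReal) :=
    calc dimH ((↑) ⁻¹' Set.range f : Set V)
        = dimH ((↑) '' ((↑) ⁻¹' Set.range f : Set V) : Set F) :=
          (isometry_subtype_coe.dimH_image _).symm
      _ ≤ dimH (Set.range f) := dimH_mono (Set.image_preimage_subset _ _)
      _ ≤ Module.finrank ℝ E := hf.dimH_range_le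
      _ < (Module.finrank ℝ V : NNReal) := by exact_mod_cast h
  have hnull := hausdorffMeasure_of_dimH_lt hdim
  rw [NNReal.coe_natCast] at hnull
  exact Measure.absolutelyContinuous_isAddHaarMeasure μ _ hnull

section MatrixLemmas

open scoped ComplexOrder MatrixOrder

variable {κ σ ι R K 𝕜 : Type*}

theorem transpose_mul_toBlocks₁₁_mul_of_mul_fromRows_one_eq_zero [CommRing R]
    [Fintype κ] [Fintype σ] [DecidableEq κ] [DecidableEq σ]
    {S : Matrix (κ ⊕ σ) (κ ⊕ σ) R} {Z : Matrix κ σ R} (hS : S.IsSymm)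
    (hSZ : S * fromRows Z (1 : Matrix σ σ R) = 0) :
    (fromCols (1 : Matrix κ κ R) (-Z))ᵀ * S.toBlocks₁₁ * fromCols 1 (-Z) = S := by
  obtain ⟨T, U, V, W, rfl⟩ : ∃ T U V W, S = fromBlocks T U V W :=
    ⟨_, _, _, _, (fromBlocks_toBlocks S).symm⟩
  obtain ⟨hT, hUV, -, -⟩ := isSymm_fromBlocks_iff.1 hS
  rw [fromBlocks_mul_fromRows, Matrix.mul_one, Matrix.mul_one, ← fromRows_zero] at hSZ
  obtain ⟨hTU, hVW⟩ := fromRows_inj hSZ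
  have hU : U = -(T * Z) := eq_neg_of_add_eq_zero_right hTU
  have hV : V = -(Zᵀ * T) := by rw [← hUV, hU, transpose_neg, transpose_mul, hT.eq]
  have hW : W = Zᵀ * T * Z := by
    rw [eq_neg_of_add_eq_zero_right hVW, hV, Matrix.neg_mul, neg_neg]
  rw [Matrix.mul_assoc, toBlocks_fromBlocks₁₁, transpose_fromCols, mul_fromCols,
    fromRows_mul_fromCols, hU, hV, hW]
  simp only [transpose_one, transpose_neg, Matrix.one_mul, Matrix.mul_one, Matrix.neg_mul,
    Matrix.mul_neg, neg_neg, Matrix.mul_assoc]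

theorem exists_isUnit_submatrix_of_linearIndependent_col [Field K] [Finite ι] [Fintype σ]
    [DecidableEq σ] {Y : Matrix ι σ K} (hY : LinearIndependent K Y.col) :
    ∃ f : σ → ι, Function.Injective f ∧ IsUnit (Y.submatrix f id) := by
  have := Fintype.ofFinite ι
  obtain ⟨τ, a, ha, hspan, hli⟩ := exists_linearIndependent' K Y.row
  have : Fintype τ := @Fintype.ofFinite _ (Finite.of_injective a ha)
  have hcard : Fintype.card σ = Fintype.card τ := by
    rw [← finrank_span_eq_card hli, hspan, ← rank_eq_finrank_span_row, ← rank_transpose,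
      LinearIndependent.rank_matrix (M := Yᵀ) hY]
  let g : σ ≃ τ := Fintype.equivOfCardEq hcard
  exact ⟨a ∘ g, ha.comp g.injective,
    linearIndependent_rows_iff_isUnit.1 (hli.comp g g.injective)⟩

theorem exists_equiv_comp_inr_eq_of_injective [Fintype ι] [Fintype κ] [Fintype σ]
    (hcard : Fintype.card κ + Fintype.card σ = Fintype.card ι) {f : σ → ι}
    (hf : Function.Injective f) : ∃ e : κ ⊕ σ ≃ ι, e ∘ Sum.inr = f := by
  classical
  have hcompl : Fintype.card κ = Fintype.card ↥(Set.range f)ᶜ := by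
    rw [Fintype.card_compl_set, Set.card_range_of_injective hf, ← hcard, Nat.add_sub_cancel]
  refine ⟨(Equiv.sumComm _ _).trans (((Equiv.ofInjective f hf).sumCongr
    (Fintype.equivOfCardEq hcompl)).trans (Equiv.Set.sumCompl _)), ?_⟩
  ext i
  simp

theorem exists_mul_submatrix_eq_fromRows_one [Field K] [Fintype ι] [Fintype κ] [Fintype σ]
    [DecidableEq σ] (hcard : Fintype.card κ + Fintype.card σ = Fintype.card ι)
    {Y : Matrix ι σ K} (hY : LinearIndependent K Y.col) :
    ∃ (e : κ ⊕ σ ≃ ι) (W : Matrix σ σ K) (Z : Matrix κ σ K),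
      (Y * W).submatrix e id = fromRows Z 1 := by
  obtain ⟨f, hf, hYf⟩ := exists_isUnit_submatrix_of_linearIndependent_col hY
  obtain ⟨e, rfl⟩ := exists_equiv_comp_inr_eq_of_injective hcard hf
  set W := (Y.submatrix (e ∘ Sum.inr) id)⁻¹
  have hW : ((Y * W).submatrix e id).toRows₂ = 1 :=
    mul_nonsing_inv _ ((isUnit_iff_isUnit_det _).1 hYf)
  exact ⟨e, W, ((Y * W).submatrix e id).toRows₁, by rw [← hW, fromRows_toRows]⟩

theorem trace_mul_nonneg_of_posSemidef [RCLike 𝕜] [Fintype ι] {S X : Matrix ι ι 𝕜}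
    (hS : S.PosSemidef) (hX : X.PosSemidef) : 0 ≤ (S * X).trace := by
  classical
  obtain ⟨B, rfl⟩ := CStarAlgebra.nonneg_iff_eq_star_mul_self.1 hX.nonneg
  rw [star_eq_conjTranspose, ← Matrix.mul_assoc, trace_mul_comm, ← Matrix.mul_assoc]
  exact (hS.mul_mul_conjTranspose_same B).trace_nonneg

end MatrixLemmas

section SymmSpace

/-- Symmetric matrices as functions of the unordered pair of indices of an entry; used to count
their dimension. -/
def symmSpaceEquivSym2 (n : ℕ) : symmSpace n ≃ₗ[ℝ] (Sym2 (Fin n) → ℝ) where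
  toFun X := Sym2.lift ⟨fun i j => X.1 i j, fun i j => (X.2.apply i j).symm⟩
  invFun w := ⟨of fun i j => w s(i, j), IsSymm.ext fun i j => congrArg w Sym2.eq_swap⟩
  map_add' X Y := by ext ⟨i, j⟩; rfl
  map_smul' c X := by ext ⟨i, j⟩; rfl
  left_inv X := rfl
  right_inv w := by ext ⟨i, j⟩; rfl

theorem finrank_symmSpace (n : ℕ) : Module.finrank ℝ (symmSpace n) = (n + 1).choose 2 := by
  rw [(symmSpaceEquivSym2 n).finrank_eq, Module.finrank_fintype_fun_eq_card, Sym2.card,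
    Fintype.card_fin]

theorem Aadj_isSymm {n m : ℕ} {A : Fin m → Matrix (Fin n) (Fin n) ℝ} (hA : ∀ i, (A i).IsSymm)
    (μ : Fin m → ℝ) : (Aadj A μ).IsSymm :=
  (symmSpace n).sum_mem fun i _ => (symmSpace n).smul_mem (μ i) (hA i)

end SymmSpace

section KernelParametrization

variable {n m p r : ℕ}

/-- Parametrization `(T, Z, μ) ↦ S + 𝒜*(μ)` of the cost matrices having a slack matrix `S` which is
symmetric and vanishes on the columns of `[Z; I]`, where `e` orders the rows. Such an `S` is
determined by its top left block `T`, as `S = [I, -Z]ᵀ T [I, -Z]`. -/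
def kernelParam (A : Fin m → Matrix (Fin n) (Fin n) ℝ) (e : Fin r ⊕ Fin p ≃ Fin n)
    (x : symmSpace r × Matrix (Fin r) (Fin p) ℝ × (Fin m → ℝ)) : Matrix (Fin n) (Fin n) ℝ :=
  ((fromCols (1 : Matrix (Fin r) (Fin r) ℝ) (-x.2.1))ᵀ * (x.1 : Matrix (Fin r) (Fin r) ℝ) *
    fromCols 1 (-x.2.1)).submatrix e.symm e.symm + Aadj A x.2.2

theorem exists_mem_range_kernelParam_of_slack_mul_eq_zero {A : Fin m → Matrix (Fin n) (Fin n) ℝ}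
    {C : Matrix (Fin n) (Fin n) ℝ} {μ : Fin m → ℝ} {Y : Matrix (Fin n) (Fin p) ℝ}
    (hS : (C - Aadj A μ).IsSymm) (hSY : (C - Aadj A μ) * Y = 0)
    (hY : LinearIndependent ℝ Y.col) :
    ∃ e : Fin (n - p) ⊕ Fin p ≃ Fin n, C ∈ Set.range (kernelParam A e) := by
  have hpn : p ≤ n := by simpa using hY.fintype_card_le_finrank
  obtain ⟨e, W, Z, hZ⟩ := exists_mul_submatrix_eq_fromRows_one
    (κ := Fin (n - p)) (by simpa using Nat.sub_add_cancel hpn) hY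
  set S' := (C - Aadj A μ).submatrix e e with hS'_def
  have hS' : S'.IsSymm := hS.submatrix e
  have hS'Z : S' * fromRows Z (1 : Matrix (Fin p) (Fin p) ℝ) = 0 := by
    rw [← hZ, submatrix_mul_equiv, ← Matrix.mul_assoc, hSY, Matrix.zero_mul, submatrix_zero]
    rfl
  refine ⟨e, (⟨S'.toBlocks₁₁, hS'.submatrix Sum.inl⟩, Z, μ), ?_⟩
  simp only [kernelParam]
  rw [transpose_mul_toBlocks₁₁_mul_of_mul_fromRows_one_eq_zero hS' hS'Z, hS'_def,
    submatrix_submatrix, e.self_comp_symm, submatrix_id_id, sub_add_cancel]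

theorem choose_two_add_lt_choose_two (hpm : 2 * m < p * (p + 1)) :
    (r + 1).choose 2 + (r * p + m) < (r + p + 1).choose 2 := by
  have htwice (k : ℕ) : 2 * (k + 1).choose 2 = (k + 1) * k := by
    rw [Nat.choose_two_right, Nat.mul_div_cancel' (Nat.even_mul_pred_self _).two_dvd,
      Nat.add_sub_cancel]
  linarith [htwice r, htwice (r + p)]

attribute [local instance] Matrix.normedAddCommGroup Matrix.normedSpace

theorem contDiff_kernelParam (A : Fin m → Matrix (Fin n) (Fin n) ℝ)
    (e : Fin r ⊕ Fin p ≃ Fin n) {k : WithTop ℕ∞} : ContDiff ℝ k (kernelParam A e) := by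
  have hT (i j : Fin r) : ContDiff ℝ k fun T : symmSpace r => T.1 i j :=
    (contDiff_apply_apply ℝ ℝ i j).comp (symmSpace r).subtypeL.contDiff
  have hL (i : Fin r) (j : Fin r ⊕ Fin p) : ContDiff ℝ k fun Z : Matrix (Fin r) (Fin p) ℝ =>
      fromCols (1 : Matrix (Fin r) (Fin r) ℝ) (-Z) i j := by
    rcases j with j | j
    · exact contDiff_const
    · exact (contDiff_apply_apply ℝ ℝ i j).neg
  have hμ (a : Fin m) : ContDiff ℝ k fun μ : Fin m → ℝ => μ a := contDiff_apply ℝ ℝ a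
  refine contDiff_pi.2 fun i => contDiff_pi.2 fun j => ?_
  simp only [kernelParam, Aadj, Matrix.add_apply, submatrix_apply, mul_apply, transpose_apply,
    Matrix.sum_apply, Matrix.smul_apply, smul_eq_mul]
  have hquad : ContDiff ℝ k fun x : symmSpace r × Matrix (Fin r) (Fin p) ℝ × (Fin m → ℝ) =>
      ∑ l, (∑ h, fromCols (1 : Matrix (Fin r) (Fin r) ℝ) (-x.2.1) h (e.symm i) * x.1.1 h l) *
        fromCols (1 : Matrix (Fin r) (Fin r) ℝ) (-x.2.1) l (e.symm j) :=
    ContDiff.sum fun l _ => (ContDiff.sum fun h _ =>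
      (hL h (e.symm i)).fst'.snd'.mul (hT h l).fst').mul (hL l (e.symm j)).fst'.snd'
  exact hquad.add (ContDiff.sum fun a _ => (hμ a).snd'.snd'.mul contDiff_const)

theorem isNullSymmSet_range_kernelParam (A : Fin m → Matrix (Fin n) (Fin n) ℝ)
    (e : Fin r ⊕ Fin p ≃ Fin n) (hpm : 2 * m < p * (p + 1)) :
    IsNullSymmSet n (Set.range (kernelParam A e)) := by
  obtain rfl : r + p = n := by simpa using Fintype.card_congr e
  intro ν hν
  refine addHaar_preimage_range_eq_zero_of_finrank_lt (symmSpace _) (hV := ⟨rfl⟩) ν (hμ := hν)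
    (contDiff_kernelParam A e) ?_
  simpa [finrank_symmSpace, Module.finrank_matrix] using choose_two_add_lt_choose_two hpm

end KernelParametrization

section Optimality

variable {n m p : ℕ} {A : Fin m → Matrix (Fin n) (Fin n) ℝ} {b : Fin m → ℝ}
  {C : Matrix (Fin n) (Fin n) ℝ} {Y : Matrix (Fin n) (Fin p) ℝ}

theorem mul_transpose_mem_sdpFeas (hY : Y ∈ facFeas A b p) : Y * Yᵀ ∈ sdpFeas A b :=
  have hpsd : (Y * Yᵀ).PosSemidef := by
    simpa only [conjTranspose_eq_transpose_of_trivial] using posSemidef_self_mul_conjTranspose Y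
  ⟨isHermitian_iff_isSymm.1 hpsd.isHermitian, hY, hpsd⟩

theorem trace_mul_eq_trace_slack_mul_add (A : Fin m → Matrix (Fin n) (Fin n) ℝ)
    (C X : Matrix (Fin n) (Fin n) ℝ) (μ : Fin m → ℝ) :
    (C * X).trace = ((C - Aadj A μ) * X).trace + μ ⬝ᵥ Aop A X := by
  have hAdj : (Aadj A μ * X).trace = μ ⬝ᵥ Aop A X := by
    simp only [Aadj, Aop, Matrix.sum_mul, trace_sum, Matrix.smul_mul, trace_smul, dotProduct,
      smul_eq_mul]
  rw [← hAdj, ← trace_add, ← Matrix.add_mul, sub_add_cancel]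

theorem isMinOn_sdpFeas_of_slack_posSemidef {μ : Fin m → ℝ} (hY : Y ∈ facFeas A b p)
    (hSY : (C - Aadj A μ) * Y = 0) (hS : (C - Aadj A μ).PosSemidef) :
    IsMinOn (fun X => (C * X).trace) (sdpFeas A b) (Y * Yᵀ) := by
  refine isMinOn_iff.2 fun X hX => ?_
  calc (C * (Y * Yᵀ)).trace = μ ⬝ᵥ b := by
        rw [trace_mul_eq_trace_slack_mul_add A C _ μ, ← Matrix.mul_assoc, hSY, Matrix.zero_mul,
          trace_zero, zero_add, hY]
    _ ≤ ((C - Aadj A μ) * X).trace + μ ⬝ᵥ b :=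
        le_add_of_nonneg_left (trace_mul_nonneg_of_posSemidef hS hX.2.2)
    _ = (C * X).trace := by rw [trace_mul_eq_trace_slack_mul_add A C X μ, hX.2.1]

theorem vecMulVec_mem_tangentSet {z : Fin p → ℝ} (hYz : Y *ᵥ z = 0) (x : Fin n → ℝ) :
    vecMulVec x z ∈ tangentSet A Y := by
  have hright : vecMulVec x z * Yᵀ = 0 := by
    rw [vecMulVec_mul, vecMul_transpose, hYz, vecMulVec_zero]
  have hleft : Y * (vecMulVec x z)ᵀ = 0 := by
    rw [transpose_vecMulVec, mul_vecMulVec, hYz, zero_vecMulVec]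
  ext i
  simp only [hright, hleft, Aop, add_zero, Matrix.mul_zero, trace_zero, Pi.zero_apply]

theorem frobInner_vecMulVec_mul (S : Matrix (Fin n) (Fin n) ℝ) (x : Fin n → ℝ) (z : Fin p → ℝ) :
    frobInner (vecMulVec x z) (S * vecMulVec x z) = (x ⬝ᵥ S *ᵥ x) * (z ⬝ᵥ z) := by
  rw [frobInner, transpose_vecMulVec, mul_vecMulVec, vecMulVec_mul_vecMulVec, trace_vecMulVec,
    dotProduct_smul, smul_eq_mul]

theorem posSemidef_of_frobInner_nonneg_on_tangentSet {S : Matrix (Fin n) (Fin n) ℝ}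
    (hS : S.IsSymm) (hnonneg : ∀ Ydot ∈ tangentSet A Y, 0 ≤ frobInner Ydot (S * Ydot))
    {z : Fin p → ℝ} (hz : z ≠ 0) (hYz : Y *ᵥ z = 0) : S.PosSemidef := by
  refine .of_dotProduct_mulVec_nonneg (isHermitian_iff_isSymm.2 hS) fun x => ?_
  have hx := hnonneg _ (vecMulVec_mem_tangentSet hYz x)
  rw [frobInner_vecMulVec_mul] at hx
  exact nonneg_of_mul_nonneg_left hx (dotProduct_star_self_pos_iff.2 hz)

namespace IsSOCP

theorem isMinOn_sdpFeas_of_not_linearIndependent_col (hA : ∀ i, (A i).IsSymm) (hC : C.IsSymm)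
    (h : IsSOCP A b C Y) (hY : ¬ LinearIndependent ℝ Y.col) :
    IsMinOn (fun X => (C * X).trace) (sdpFeas A b) (Y * Yᵀ) := by
  obtain ⟨hfeas, μ, hSY, hnonneg⟩ := h
  obtain ⟨z, hYz, hz⟩ : ∃ z, Y *ᵥ z = 0 ∧ z ≠ 0 := by
    rw [← mulVec_injective_iff, ← coe_mulVecLin, injective_iff_map_eq_zero] at hY
    simpa using hY
  exact isMinOn_sdpFeas_of_slack_posSemidef hfeas hSY <|
    posSemidef_of_frobInner_nonneg_on_tangentSet (hC.sub (Aadj_isSymm hA μ)) hnonneg hz hYz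

theorem exists_mem_range_kernelParam (hA : ∀ i, (A i).IsSymm) (hC : C.IsSymm)
    (h : IsSOCP A b C Y) (hY : LinearIndependent ℝ Y.col) :
    ∃ e : Fin (n - p) ⊕ Fin p ≃ Fin n, C ∈ Set.range (kernelParam A e) :=
  let ⟨_, μ, hSY, _⟩ := h
  exists_mem_range_kernelParam_of_slack_mul_eq_zero (hC.sub (Aadj_isSymm hA μ)) hSY hY

end IsSOCP

theorem isMinOn_facFeas_of_isMinOn_sdpFeas
    (hY : IsMinOn (fun X => (C * X).trace) (sdpFeas A b) (Y * Yᵀ)) :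
    IsMinOn (fun Z => (C * (Z * Zᵀ)).trace) (facFeas A b p) Y :=
  hY.comp_mapsTo (fun _ => mul_transpose_mem_sdpFeas) rfl

theorem fstar_lt_iff_not_isMinOn (hcompact : IsCompact (sdpFeas A b))
    {X : Matrix (Fin n) (Fin n) ℝ} (hX : X ∈ sdpFeas A b) :
    fstar A b C < (C * X).trace ↔ ¬ IsMinOn (fun X => (C * X).trace) (sdpFeas A b) X := by
  have hbdd : BddBelow ((fun X => (C * X).trace) '' sdpFeas A b) :=
    (hcompact.image (by fun_prop)).bddBelow
  rw [fstar, csInf_lt_iff hbdd ⟨_, X, hX, rfl⟩, isMinOn_iff]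
  simp

end Optimality

section SpuriousCosts

variable {n m p : ℕ} {A : Fin m → Matrix (Fin n) (Fin n) ℝ} {b : Fin m → ℝ}

/-- The cost matrices for which some second-order critical point is not globally optimal.
Optimality is phrased as minimality over the feasible set rather than through `fstar`, whose value
is the junk `0` when the problem is unbounded below. -/
def spuriousCosts (A : Fin m → Matrix (Fin n) (Fin n) ℝ) (b : Fin m → ℝ) (p : ℕ) :
    Set (Matrix (Fin n) (Fin n) ℝ) :=
  {C | ∃ Y : Matrix (Fin n) (Fin p) ℝ, IsSOCP A b C Y ∧
    ¬ IsMinOn (fun X => (C * X).trace) (sdpFeas A b) (Y * Yᵀ)}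

theorem setOf_fstar_lt_eq_spuriousCosts (hcompact : IsCompact (sdpFeas A b)) :
    {C | ∃ Y : Matrix (Fin n) (Fin p) ℝ, IsSOCP A b C Y ∧ fstar A b C < (C * (Y * Yᵀ)).trace} =
      spuriousCosts A b p := by
  ext C
  exact exists_congr fun Y => and_congr_right fun hY =>
    fstar_lt_iff_not_isMinOn hcompact (mul_transpose_mem_sdpFeas hY.1)

theorem IsSOCP.isMinOn_of_notMem_spuriousCosts {C : Matrix (Fin n) (Fin n) ℝ}
    {Y : Matrix (Fin n) (Fin p) ℝ} (hY : IsSOCP A b C Y) (hC : C ∉ spuriousCosts A b p) :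
    IsMinOn (fun X => (C * X).trace) (sdpFeas A b) (Y * Yᵀ) :=
  by_contra fun hnot => hC ⟨Y, hY, hnot⟩

theorem sdp_burer_monteiro_generic_global_optimality_general
    (A : Fin m → Matrix (Fin n) (Fin n) ℝ) (hA : ∀ i, (A i).IsSymm) (b : Fin m → ℝ)
    (hpm : 2 * m < p * (p + 1)) : IsNullSymmSet n (spuriousCosts A b p) := by
  intro ν hν
  refine measure_mono_null ?_ (measure_iUnion_null fun e : Fin (n - p) ⊕ Fin p ≃ Fin n =>
    isNullSymmSet_range_kernelParam A e hpm ν hν)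
  rintro C ⟨Y, hY, hnot⟩
  have hli : LinearIndependent ℝ Y.col :=
    not_not.1 (mt (hY.isMinOn_sdpFeas_of_not_linearIndependent_col hA C.2) hnot)
  exact Set.mem_iUnion.2 (hY.exists_mem_range_kernelParam hA C.2 hli)

end SpuriousCosts

/-- main theorem. Assuming `p(p+1)/2 > m`, compactness of 𝒞 and constraint
qualifications on all of ℳ, the set of symmetric cost matrices `C` admitting a
non-globally-optimal second-order critical point is null; consequently, outside this null
set every second-order critical point is globally optimal for the factorized problem and
`Y Yᵀ` is globally optimal for the SDP. -/
theorem sdp_burer_monteiro_generic_global_optimality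
    (n m p : ℕ) (hn : 0 < n) (hm : 0 < m) (hp : 0 < p)
    (A : Fin m → Matrix (Fin n) (Fin n) ℝ) (hA : ∀ i, (A i).IsSymm) (b : Fin m → ℝ)
    (hpm : 2 * m < p * (p + 1))
    (hcompact : IsCompact (sdpFeas A b))
    (hCQ : ∀ Y ∈ facFeas A b p, LinearIndependent ℝ (fun i => A i * Y)) :
    IsNullSymmSet n {C | ∃ Y : Matrix (Fin n) (Fin p) ℝ,
        IsSOCP A b C Y ∧ fstar A b C < (C * (Y * Yᵀ)).trace} ∧
    ∀ C : Matrix (Fin n) (Fin n) ℝ, C.IsSymm →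
      C ∉ {C | ∃ Y : Matrix (Fin n) (Fin p) ℝ,
        IsSOCP A b C Y ∧ fstar A b C < (C * (Y * Yᵀ)).trace} →
      ∀ Y : Matrix (Fin n) (Fin p) ℝ, IsSOCP A b C Y →
        (∀ X ∈ sdpFeas A b, (C * (Y * Yᵀ)).trace ≤ (C * X).trace) ∧
        (∀ Z ∈ facFeas A b p, (C * (Y * Yᵀ)).trace ≤ (C * (Z * Zᵀ)).trace) := by
  rw [setOf_fstar_lt_eq_spuriousCosts hcompact]
  refine ⟨sdp_burer_monteiro_generic_global_optimality_general A hA b hpm, fun C _ hC Y hY => ?_⟩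
  have hmin := hY.isMinOn_of_notMem_spuriousCosts hC
  exact ⟨isMinOn_iff.1 hmin, isMinOn_iff.1 (isMinOn_facFeas_of_isMinOn_sdpFeas hmin)⟩

end
end

section
/- Suppose all matrices X ∈ 𝒞 have the same trace and there exists a relative interior point X' ∈ 𝒞, i.e., X' is positive definite and 𝒜(X') = b (Slater condition). Then the identity matrix lies in the image of 𝒜*: there exists ν ∈ ℝ^m such that ν_1 A_1 + ... + ν_m A_m = I_n. -/
open Matrix MeasureTheory

noncomputable section

/-!
Let `C` be a Hermitian matrix such that `Tr (C * X)` is constant on the feasible set, and let `P`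
be a positive definite feasible point. Every Hermitian `S` with `Tr (A i * S) = 0` for all `i`
gives a feasible point `P + t • S` for some `t > 0`, since `P` is interior to the positive
semidefinite cone; constancy then forces `Tr (C * S) = 0`. So the functional `Tr (C * ·)` vanishes
on the common kernel of the functionals `Tr (A i * ·)`, hence is a linear combination of them, and
nondegeneracy of the trace pairing on Hermitian matrices turns this into a linear combination of
matrices. Constant trace is the case `C = 1`.
-/

theorem mem_span_range_of_const_on_slice {k E ι : Type*} [Field k] [AddCommGroup E] [Module k E]
    [Finite ι] {K : Set E} {x : E} (hx : ∀ v, ∃ t : k, t ≠ 0 ∧ x + t • v ∈ K)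
    {L : ι → Module.Dual k E} {f : Module.Dual k E}
    (hf : ∀ y ∈ K, (∀ i, L i y = L i x) → f y = f x) : f ∈ Submodule.span k (Set.range L) := by
  refine mem_span_of_iInf_ker_le_ker fun v hv ↦ ?_
  simp only [Submodule.mem_iInf, LinearMap.mem_ker] at hv ⊢
  obtain ⟨t, ht, htv⟩ := hx v
  have hft : f (x + t • v) = f x := hf _ htv fun i ↦ by simp [hv i]
  simpa [ht] using hft

section StarOrdered

variable {R : Type*} [TopologicalSpace R] [Ring R] [StarRing R] [PartialOrder R]
  [StarOrderedRing R] [Algebra ℝ R] [ContinuousFunctionalCalculus ℝ R IsSelfAdjoint]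

theorem exists_pos_le_algebraMap {s : R} (hs : IsSelfAdjoint s) :
    ∃ c : ℝ, 0 < c ∧ s ≤ algebraMap ℝ R c := by
  obtain ⟨c, hc, hsc⟩ :=
    (ContinuousFunctionalCalculus.isCompact_spectrum (R := ℝ) s).bddAbove.exists_ge 1
  exact ⟨c, one_pos.trans_le hc, le_algebraMap_of_spectrum_le hsc⟩

variable [NonnegSpectrumClass ℝ R]

theorem exists_pos_algebraMap_le {a : R} (ha : IsStrictlyPositive a) :
    ∃ r : ℝ, 0 < r ∧ algebraMap ℝ R r ≤ a := by
  cases subsingleton_or_nontrivial R with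
  | inl _ => exact ⟨1, one_pos, (Subsingleton.elim _ _).le⟩
  | inr _ =>
    exact (CFC.exists_pos_algebraMap_le_iff ha.isSelfAdjoint).mpr fun _ hx ↦ ha.spectrum_pos hx

theorem exists_pos_nonneg_add_smul [StarModule ℝ R] {a s : R} (ha : IsStrictlyPositive a)
    (hs : IsSelfAdjoint s) : ∃ t : ℝ, 0 < t ∧ 0 ≤ a + t • s := by
  obtain ⟨r, hr, hra⟩ := exists_pos_algebraMap_le ha
  obtain ⟨c, hc, hsc⟩ := exists_pos_le_algebraMap hs.neg
  refine ⟨r / c, div_pos hr hc, ?_⟩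
  have hle : (r / c) • -s ≤ a :=
    calc (r / c) • -s ≤ (r / c) • algebraMap ℝ R c :=
          smul_le_smul_of_nonneg_left hsc (div_pos hr hc).le
      _ = algebraMap ℝ R r := by
          simp only [Algebra.algebraMap_eq_smul_one, smul_smul, div_mul_cancel₀ r hc.ne']
      _ ≤ a := hra
  rwa [smul_neg, neg_le_iff_add_nonneg] at hle

end StarOrdered

section Hermitian

open scoped ComplexOrder MatrixOrder

variable {𝕜 n : Type*} [RCLike 𝕜]

theorem exists_pos_posSemidef_add_smul [Finite n] {P S : Matrix n n 𝕜} (hP : P.PosDef)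
    (hS : S.IsHermitian) : ∃ t : ℝ, 0 < t ∧ (P + t • S).PosSemidef := by
  classical
  cases nonempty_fintype n
  simpa only [nonneg_iff_posSemidef] using
    exists_pos_nonneg_add_smul hP.isStrictlyPositive hS.isSelfAdjoint

variable [Fintype n]

/-- The trace pairing `(A, X) ↦ Tr (A * X)` on the real vector space of Hermitian matrices. The
trace of a product of two Hermitian matrices is real, so taking the real part only changes the
codomain. -/
def hermitianTraceForm : LinearMap.BilinForm ℝ (selfAdjoint (Matrix n n 𝕜)) :=
  LinearMap.mk₂ ℝ (fun A X ↦ RCLike.re ((A : Matrix n n 𝕜) * (X : Matrix n n 𝕜)).trace)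
    (fun A B X ↦ by simp [Matrix.add_mul])
    (fun c A X ↦ by simp [RCLike.smul_re])
    (fun A X Y ↦ by simp [Matrix.mul_add])
    (fun c A X ↦ by simp [RCLike.smul_re])

theorem hermitianTraceForm_apply (A X : selfAdjoint (Matrix n n 𝕜)) :
    hermitianTraceForm A X = RCLike.re ((A : Matrix n n 𝕜) * (X : Matrix n n 𝕜)).trace :=
  rfl

theorem hermitianTraceForm_injective :
    Function.Injective (hermitianTraceForm (𝕜 := 𝕜) (n := n)) := by
  refine (injective_iff_map_eq_zero _).mpr fun A hA ↦ Subtype.ext ?_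
  have hre : RCLike.re ((A : Matrix n n 𝕜)ᴴ * (A : Matrix n n 𝕜)).trace = 0 := by
    rw [← star_eq_conjTranspose, A.2.star_eq, ← hermitianTraceForm_apply, hA, LinearMap.zero_apply]
  have him : RCLike.im ((A : Matrix n n 𝕜)ᴴ * (A : Matrix n n 𝕜)).trace = 0 :=
    (RCLike.nonneg_iff.mp (posSemidef_conjTranspose_mul_self _).trace_nonneg).2
  exact trace_conjTranspose_mul_self_eq_zero_iff.mp
    (RCLike.ext (hre.trans (map_zero _).symm) (him.trans (map_zero _).symm))

theorem mem_span_range_of_hermitianTraceForm_const {ι : Type*} [Finite ι]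
    {A : ι → selfAdjoint (Matrix n n 𝕜)} {C P : selfAdjoint (Matrix n n 𝕜)}
    (hP : (P : Matrix n n 𝕜).PosDef)
    (hconst : ∀ X : selfAdjoint (Matrix n n 𝕜), (X : Matrix n n 𝕜).PosSemidef →
      (∀ i, hermitianTraceForm (A i) X = hermitianTraceForm (A i) P) →
        hermitianTraceForm C X = hermitianTraceForm C P) :
    C ∈ Submodule.span ℝ (Set.range A) := by
  rw [← Submodule.apply_mem_span_image_iff_mem_span
      (hermitianTraceForm_injective (𝕜 := 𝕜) (n := n)),
    ← Set.range_comp]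
  refine mem_span_range_of_const_on_slice (x := P)
    (K := {X : selfAdjoint (Matrix n n 𝕜) | (X : Matrix n n 𝕜).PosSemidef}) (fun S ↦ ?_) hconst
  obtain ⟨t, ht, h⟩ := exists_pos_posSemidef_add_smul hP S.2
  exact ⟨t, ht.ne', h⟩

end Hermitian

theorem identity_in_range_of_slater_general {n m : ℕ} {A : Fin m → Matrix (Fin n) (Fin n) ℝ}
    (hA : ∀ i, (A i).IsSymm) {b : Fin m → ℝ} {C : Matrix (Fin n) (Fin n) ℝ} (hC : C.IsSymm)
    (hconst : ∀ X ∈ sdpFeas A b, ∀ X' ∈ sdpFeas A b, (C * X).trace = (C * X').trace)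
    {P : Matrix (Fin n) (Fin n) ℝ} (hP : P.PosDef) (hPb : Aop A P = b) :
    ∃ ν : Fin m → ℝ, Aadj A ν = C := by
  let A' (i : Fin m) : selfAdjoint (Matrix (Fin n) (Fin n) ℝ) :=
    ⟨A i, isHermitian_iff_isSymm.mpr (hA i)⟩
  let C' : selfAdjoint (Matrix (Fin n) (Fin n) ℝ) := ⟨C, isHermitian_iff_isSymm.mpr hC⟩
  have hspan : C' ∈ Submodule.span ℝ (Set.range A') := by
    refine mem_span_range_of_hermitianTraceForm_const (P := ⟨P, hP.isHermitian⟩) hP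
      fun X hX hAX ↦ ?_
    simp only [hermitianTraceForm_apply, RCLike.re_to_real] at hAX ⊢
    exact hconst X ⟨isHermitian_iff_isSymm.mp X.2, (funext hAX).trans hPb, hX⟩
      P ⟨isHermitian_iff_isSymm.mp hP.isHermitian, hPb, hP.posSemidef⟩
  obtain ⟨ν, hν⟩ := (Submodule.mem_span_range_iff_exists_fun ℝ).mp hspan
  exact ⟨ν, by simpa [Aadj, A', C'] using congrArg Subtype.val hν⟩

/-- Slater condition plus constant trace implies `I_n ∈ im(𝒜*)`. -/
theorem identity_in_range_of_slater
    (n m : ℕ) (hn : 0 < n) (hm : 0 < m)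
    (A : Fin m → Matrix (Fin n) (Fin n) ℝ) (hA : ∀ i, (A i).IsSymm) (b : Fin m → ℝ)
    (htrace : ∀ X ∈ sdpFeas A b, ∀ X' ∈ sdpFeas A b, X.trace = X'.trace)
    (X' : Matrix (Fin n) (Fin n) ℝ) (hX'symm : X'.IsSymm) (hX'pd : X'.PosDef)
    (hX'feas : Aop A X' = b) :
    ∃ ν : Fin m → ℝ, Aadj A ν = 1 := by
  exact identity_in_range_of_slater_general hA isSymm_one (by simpa using htrace) hX'pd hX'feas

end
end

section
/- Assume p(p+1)/2 > m. Then the set of symmetric n×n matrices C for which there exists a first-order critical point Y of the factorized problem with full column rank — that is, Y ∈ ℳ with rank(Y) = p and μ ∈ ℝ^m such that (C − 𝒜*(μ)) Y = 0 — is a null set of symmetric matrices. Equivalently, for almost all C, every first-order critical point of the factorized problem is column rank deficient. -/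
open Matrix MeasureTheory

noncomputable section

/-!
If `Y` has full column rank `p`, then after a permutation of the coordinates its upper `p × p` block
is invertible, and `Y` may be replaced by `(1; Z)` with `Z` of size `q × p`, where `q = n - p`.
The equation `(C - N) * (1; Z) = 0` for a symmetric `C` then determines `C` polynomially from `Z`,
`N` and the lower right `q × q` block of `C`. If `N` runs through a `C¹` family with `m` parameters,
such as `𝒜*(μ)`, then these `C` lie in finitely many images of a space of dimension
`q p + q (q + 1) / 2 + m` under `C¹` maps, and this number is smaller than `n (n + 1) / 2` exactly
when `m < p (p + 1) / 2`.
-/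

section RowSelection

theorem exists_injective_isUnit_submatrix {K ι κ : Type*} [Field K] [Finite ι] [Fintype κ]
    [DecidableEq κ] (Y : Matrix ι κ K) (hY : Y.rank = Fintype.card κ) :
    ∃ f : κ → ι, Function.Injective f ∧ IsUnit (Y.submatrix f id) := by
  obtain ⟨κ', f, hf, hspan, hli⟩ := exists_linearIndependent' K Y.row
  have : Fintype κ' := @Fintype.ofFinite _ (Finite.of_injective f hf)
  have hcard : Fintype.card κ = Fintype.card κ' := by
    rw [← hY, rank_eq_finrank_span_row, ← hspan, finrank_span_eq_card hli]
  let e : κ ≃ κ' := Fintype.equivOfCardEq hcard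
  exact ⟨f ∘ e, hf.comp e.injective,
    linearIndependent_rows_iff_isUnit.1 (hli.comp e e.injective)⟩

theorem exists_sum_equiv_extending {α β ι : Type*} [Fintype α] [Fintype β] [Fintype ι]
    (hcard : Fintype.card ι = Fintype.card α + Fintype.card β)
    {f : α → ι} (hf : Function.Injective f) :
    ∃ σ : α ⊕ β ≃ ι, ∀ a, σ (Sum.inl a) = f a := by
  classical
  have hcompl : Fintype.card β = Fintype.card ((Set.range f)ᶜ : Set ι) := by
    rw [Fintype.card_compl_set, Set.card_range_of_injective hf, hcard, Nat.add_sub_cancel_left]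
  exact ⟨((Equiv.ofInjective f hf).sumCongr (Fintype.equivOfCardEq hcompl)).trans
    (Equiv.Set.sumCompl (Set.range f)), fun _ => rfl⟩

end RowSelection

section Chart

variable {R α β : Type*} [CommRing R] [Fintype β]

/-- The symmetric completion of `D`: the matrix `C` with lower right block `D` and transposed
off-diagonal blocks such that `C - N` vanishes on the columns of `(1; Z)`. Only its upper left block
may fail to be symmetric. -/
def symmCompletion (N : Matrix (α ⊕ β) (α ⊕ β) R) (Z : Matrix β α R) (D : Matrix β β R) :
    Matrix (α ⊕ β) (α ⊕ β) R :=
  let B := N.toBlocks₂₁ - (D - N.toBlocks₂₂) * Z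
  fromBlocks (N.toBlocks₁₁ - (Bᵀ - N.toBlocks₁₂) * Z) Bᵀ B D

variable [Fintype α]

theorem eq_symmCompletion [DecidableEq α] {C N : Matrix (α ⊕ β) (α ⊕ β) R} (hC : C.IsSymm)
    {Z : Matrix β α R} (h : (C - N) * fromRows (1 : Matrix α α R) Z = 0) :
    C = symmCompletion N Z C.toBlocks₂₂ := by
  have hblocks : fromRows (C.toBlocks₁₁ - N.toBlocks₁₁ + (C.toBlocks₁₂ - N.toBlocks₁₂) * Z)
      (C.toBlocks₂₁ - N.toBlocks₂₁ + (C.toBlocks₂₂ - N.toBlocks₂₂) * Z) = fromRows 0 0 := by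
    rw [fromRows_zero, ← h]
    conv_rhs => rw [← fromBlocks_toBlocks (C - N), fromBlocks_mul_fromRows, Matrix.mul_one,
      Matrix.mul_one]
    rfl
  obtain ⟨hupper, hlower⟩ := fromRows_inj hblocks
  have h₂₁ : C.toBlocks₂₁ = N.toBlocks₂₁ - (C.toBlocks₂₂ - N.toBlocks₂₂) * Z := by
    rw [← sub_eq_zero, ← hlower]
    abel
  have h₁₂ : C.toBlocks₁₂ = C.toBlocks₂₁ᵀ := by
    ext i j
    exact hC.apply _ _
  have h₁₁ : C.toBlocks₁₁ = N.toBlocks₁₁ - (C.toBlocks₁₂ - N.toBlocks₁₂) * Z := by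
    rw [← sub_eq_zero, ← hupper]
    abel
  conv_lhs => rw [← fromBlocks_toBlocks C, h₁₁, h₁₂, h₂₁]
  rfl

theorem mul_fromRows_one_eq_zero [DecidableEq α] {γ : Type*} {M : Matrix γ (α ⊕ β) R}
    {Y : Matrix (α ⊕ β) α R} (hY : IsUnit Y.toRows₁) (h : M * Y = 0) :
    M * fromRows (1 : Matrix α α R) (Y.toRows₂ * Y.toRows₁⁻¹) = 0 := by
  have hinv : Y.toRows₁ * Y.toRows₁⁻¹ = 1 :=
    mul_nonsing_inv _ ((isUnit_iff_isUnit_det _).1 hY)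
  rw [← hinv, ← fromRows_mul, fromRows_toRows, ← Matrix.mul_assoc, h, Matrix.zero_mul]

theorem exists_eq_symmCompletion_submatrix {K ι : Type*} [Field K] [Fintype ι]
    (hcard : Fintype.card ι = Fintype.card α + Fintype.card β) {C N : Matrix ι ι K}
    (hC : C.IsSymm) {Y : Matrix ι α K} (hY : Y.rank = Fintype.card α) (h : (C - N) * Y = 0) :
    ∃ (σ : α ⊕ β ≃ ι) (Z : Matrix β α K) (D : Matrix β β K), D.IsSymm ∧
      C = (symmCompletion (N.submatrix σ σ) Z D).submatrix σ.symm σ.symm := by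
  classical
  obtain ⟨f, hf, hunit⟩ := exists_injective_isUnit_submatrix Y hY
  obtain ⟨σ, hσ⟩ := exists_sum_equiv_extending hcard hf
  have hrows : IsUnit (Y.submatrix σ id).toRows₁ := by
    convert hunit using 1
    ext i j
    exact congrArg (Y · j) (hσ i)
  have hreindexed : (C.submatrix σ σ - N.submatrix σ σ) * Y.submatrix σ id = 0 := by
    change (C - N).submatrix σ σ * Y.submatrix σ id = 0
    rw [submatrix_mul_equiv, h, submatrix_zero, Pi.zero_apply, Pi.zero_apply]
  have hCσ : (C.submatrix σ σ).IsSymm := hC.submatrix σ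
  refine ⟨σ, (Y.submatrix σ id).toRows₂ * (Y.submatrix σ id).toRows₁⁻¹,
    (C.submatrix σ σ).toBlocks₂₂, hCσ.submatrix Sum.inr, ?_⟩
  rw [← eq_symmCompletion hCσ (mul_fromRows_one_eq_zero hrows hreindexed),
    submatrix_submatrix, σ.self_comp_symm, submatrix_id_id]

end Chart

section Smoothness

attribute [local instance] Matrix.normedAddCommGroup Matrix.normedSpace

variable {𝕜 E ι κ ν : Type*} [NontriviallyNormedField 𝕜] [NormedAddCommGroup E] [NormedSpace 𝕜 E]
  [Fintype ι] [Fintype κ] [Fintype ν] {k : WithTop ℕ∞}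

theorem contDiff_matrix_iff {f : E → Matrix ι κ 𝕜} :
    ContDiff 𝕜 k f ↔ ∀ i j, ContDiff 𝕜 k fun x => f x i j :=
  contDiff_pi.trans (forall_congr' fun _ => contDiff_pi)

theorem contDiff_matrix_mul {f : E → Matrix ι κ 𝕜} {g : E → Matrix κ ν 𝕜}
    (hf : ContDiff 𝕜 k f) (hg : ContDiff 𝕜 k g) : ContDiff 𝕜 k fun x => f x * g x :=
  contDiff_matrix_iff.2 fun i j => ContDiff.sum fun l _ =>
    (contDiff_matrix_iff.1 hf i l).mul (contDiff_matrix_iff.1 hg l j)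

theorem contDiff_matrix_submatrix {ι' κ' : Type*} [Fintype ι'] [Fintype κ']
    {f : E → Matrix ι κ 𝕜} (hf : ContDiff 𝕜 k f) (r : ι' → ι) (c : κ' → κ) :
    ContDiff 𝕜 k fun x => (f x).submatrix r c :=
  contDiff_matrix_iff.2 fun i j => contDiff_matrix_iff.1 hf (r i) (c j)

theorem contDiff_symmCompletion {α β : Type*} [Fintype α] [Fintype β]
    {N : E → Matrix (α ⊕ β) (α ⊕ β) 𝕜} {Z : E → Matrix β α 𝕜} {D : E → Matrix β β 𝕜}
    (hN : ContDiff 𝕜 k N) (hZ : ContDiff 𝕜 k Z) (hD : ContDiff 𝕜 k D) :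
    ContDiff 𝕜 k fun x => symmCompletion (N x) (Z x) (D x) := by
  have hB : ContDiff 𝕜 k fun x => (N x).toBlocks₂₁ - (D x - (N x).toBlocks₂₂) * Z x :=
    (contDiff_matrix_submatrix hN _ _).sub
      (contDiff_matrix_mul (hD.sub (contDiff_matrix_submatrix hN _ _)) hZ)
  have hBt : ContDiff 𝕜 k fun x => ((N x).toBlocks₂₁ - (D x - (N x).toBlocks₂₂) * Z x)ᵀ :=
    contDiff_matrix_iff.2 fun i j => contDiff_matrix_iff.1 hB j i
  have hA : ContDiff 𝕜 k fun x => (N x).toBlocks₁₁ -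
      (((N x).toBlocks₂₁ - (D x - (N x).toBlocks₂₂) * Z x)ᵀ - (N x).toBlocks₁₂) * Z x :=
    (contDiff_matrix_submatrix hN _ _).sub
      (contDiff_matrix_mul (hBt.sub (contDiff_matrix_submatrix hN _ _)) hZ)
  refine contDiff_matrix_iff.2 ?_
  rintro (i | i) (j | j)
  exacts [contDiff_matrix_iff.1 hA i j, contDiff_matrix_iff.1 hBt i j,
    contDiff_matrix_iff.1 hB i j, contDiff_matrix_iff.1 hD i j]

theorem contDiff_Aadj {n m : ℕ} (A : Fin m → Matrix (Fin n) (Fin n) ℝ) :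
    ContDiff ℝ k (Aadj A) :=
  ContDiff.sum fun i _ => (contDiff_apply ℝ ℝ i).smul contDiff_const

end Smoothness

section DimensionCount

/-- A symmetric matrix is the same as a function on unordered pairs of indices. -/
def symmSpaceEquiv (n : ℕ) : symmSpace n ≃ₗ[ℝ] (Sym2 (Fin n) → ℝ) where
  toFun C := Sym2.lift ⟨fun i j => C.1 i j, fun i j => C.2.apply j i⟩
  invFun s := ⟨of fun i j => s s(i, j), by ext i j; simp [Sym2.eq_swap]⟩
  map_add' C D := by ext z; induction z; rfl
  map_smul' c C := by ext z; induction z; rfl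
  left_inv C := rfl
  right_inv s := by ext z; induction z; rfl

theorem choose_two_add_add_one (p q : ℕ) :
    (p + q + 1).choose 2 = q * p + (q + 1).choose 2 + (p + 1).choose 2 := by
  rify [Nat.cast_choose_two]
  ring

end DimensionCount

section NullSets

attribute [local instance] Matrix.normedAddCommGroup Matrix.normedSpace

variable {F : Type*} [NormedAddCommGroup F] [NormedSpace ℝ F] [FiniteDimensional ℝ F]

theorem dimH_symm_annihilating_fullRank_le {n p q : ℕ} (hn : n = p + q)
    {K : F → Matrix (Fin n) (Fin n) ℝ} (hK : ContDiff ℝ 1 K) :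
    dimH {C | C.IsSymm ∧ ∃ Y : Matrix (Fin n) (Fin p) ℝ, Y.rank = p ∧
      ∃ x, (C - K x) * Y = 0} ≤ (q * p + (q + 1).choose 2 + Module.finrank ℝ F : ℕ) := by
  let chart (σ : Fin p ⊕ Fin q ≃ Fin n) (y : Matrix (Fin q) (Fin p) ℝ × symmSpace q × F) :=
    (symmCompletion ((K y.2.2).submatrix σ σ) y.1 y.2.1.1).submatrix σ.symm σ.symm
  have hchart (σ) : ContDiff ℝ 1 (chart σ) :=
    contDiff_matrix_submatrix (contDiff_symmCompletion
      (contDiff_matrix_submatrix (hK.comp (contDiff_snd.comp contDiff_snd)) σ σ) contDiff_fst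
      ((symmSpace q).subtypeL.contDiff.comp (contDiff_fst.comp contDiff_snd))) _ _
  calc
    _ ≤ dimH (⋃ σ, Set.range (chart σ)) := by
      refine dimH_mono ?_
      rintro C ⟨hC, Y, hY, x, hx⟩
      obtain ⟨σ, Z, D, hD, hCeq⟩ := exists_eq_symmCompletion_submatrix (β := Fin q)
        (by simpa using hn) hC (by simpa using hY) hx
      exact Set.mem_iUnion.2 ⟨σ, (Z, ⟨D, hD⟩, x), hCeq.symm⟩
    _ = ⨆ σ, dimH (Set.range (chart σ)) := dimH_iUnion _
    _ ≤ Module.finrank ℝ (Matrix (Fin q) (Fin p) ℝ × symmSpace q × F) :=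
      iSup_le fun σ => (hchart σ).dimH_range_le
    _ = (q * p + (q + 1).choose 2 + Module.finrank ℝ F : ℕ) := by
      simp [finrank_symmSpace, Module.finrank_matrix, add_assoc]

theorem addHaar_eq_zero_of_dimH_lt_finrank {E : Type*} [NormedAddCommGroup E] [NormedSpace ℝ E]
    [FiniteDimensional ℝ E] [MeasurableSpace E] [BorelSpace E] (ν : Measure E)
    [ν.IsAddHaarMeasure] {s : Set E} (hs : dimH s < Module.finrank ℝ E) : ν s = 0 :=
  measure_zero_of_dimH_lt (d := Module.finrank ℝ E)
    (by simpa using Measure.absolutelyContinuous_isAddHaarMeasure ν _) (by simpa using hs)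

namespace IsNullSymmSet

theorem mono {n : ℕ} {S T : Set (Matrix (Fin n) (Fin n) ℝ)} (hT : IsNullSymmSet n T)
    (hST : S ⊆ T) : IsNullSymmSet n S :=
  fun ν hν => measure_mono_null (Set.preimage_mono hST) (hT ν hν)

theorem of_dimH_lt {n : ℕ} {S : Set (Matrix (Fin n) (Fin n) ℝ)}
    (hS : dimH {C | C.IsSymm ∧ C ∈ S} < ((n + 1).choose 2 : ℕ)) : IsNullSymmSet n S := by
  intro ν hν
  -- `IsNullSymmSet` uses the product topology; only unfolding identifies it with the norm topology.
  refine @addHaar_eq_zero_of_dimH_lt_finrank (symmSpace n) _ _ _ _ ⟨rfl⟩ ν hν _ ?_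
  rw [finrank_symmSpace, ← (symmSpace n).subtypeₗᵢ.isometry.dimH_image]
  refine (dimH_mono ?_).trans_lt hS
  rintro _ ⟨C, hC, rfl⟩
  exact ⟨C.2, hC⟩

end IsNullSymmSet

theorem generic_critical_points_rank_deficient_general {n p : ℕ}
    {K : F → Matrix (Fin n) (Fin n) ℝ} (hK : ContDiff ℝ 1 K)
    (hF : 2 * Module.finrank ℝ F < p * (p + 1)) :
    IsNullSymmSet n {C | ∃ Y : Matrix (Fin n) (Fin p) ℝ, Y.rank = p ∧
      ∃ x, (C - K x) * Y = 0} := by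
  rcases le_or_gt p n with hpn | hnp
  · obtain ⟨q, rfl⟩ := Nat.exists_eq_add_of_le hpn
    refine .of_dimH_lt ((dimH_symm_annihilating_fullRank_le rfl hK).trans_lt ?_)
    have hfin : Module.finrank ℝ F < (p + 1).choose 2 := by
      rw [Nat.choose_two_right, Nat.add_sub_cancel, mul_comm (p + 1),
        Nat.lt_div_iff_mul_lt_of_dvd two_ne_zero (Nat.even_mul_succ_self p).two_dvd, mul_comm]
      exact hF
    rw [choose_two_add_add_one]
    exact_mod_cast Nat.add_lt_add_left hfin _
  · intro ν _
    convert measure_empty (μ := ν)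
    refine Set.eq_empty_of_forall_notMem ?_
    rintro C ⟨Y, hY, -⟩
    exact hnp.not_ge (hY ▸ Y.rank_le_height)

end NullSets

/-- if `p(p+1)/2 > m`, then for almost all symmetric `C` every first-order
critical point of the factorized problem is column-rank deficient: the set of `C` admitting
a full-column-rank critical point is null. -/
theorem generic_critical_points_rank_deficient
    (n m p : ℕ) (hn : 0 < n) (hm : 0 < m) (hp : 0 < p)
    (A : Fin m → Matrix (Fin n) (Fin n) ℝ) (hA : ∀ i, (A i).IsSymm) (b : Fin m → ℝ)
    (hpm : 2 * m < p * (p + 1)) :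
    IsNullSymmSet n {C | ∃ Y : Matrix (Fin n) (Fin p) ℝ,
      Y ∈ facFeas A b p ∧ Y.rank = p ∧
      ∃ μ : Fin m → ℝ, (C - Aadj A μ) * Y = 0} :=
  (generic_critical_points_rank_deficient_general (contDiff_Aadj A) (by simpa using hpm)).mono
    fun _ ⟨Y, _, hY, hμ⟩ => ⟨Y, hY, hμ⟩

end
end

section
/- Let Y ∈ ℳ be such that A_1 Y, ..., A_m Y are linearly independent, and let μ ∈ ℝ^m be the unique solution of the normal equations Tr(A_i 𝒜*(μ) Y Yᵀ) = Tr(A_i C Y Yᵀ) for i = 1, ..., m. Set S = C − 𝒜*(μ). Then 2 S Y lies in T_Yℳ and equals the orthogonal projection, with respect to the Frobenius inner product on ℝ^{n×p}, of 2 C Y onto the subspace T_Yℳ; that is, the Riemannian gradient of f at Y is 2 S Y. -/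
open Matrix MeasureTheory

noncomputable section

/-!
Since the `A i` are symmetric, `T_Yℳ` is the kernel of `Z ↦ 𝒜(Z Yᵀ)`. The adjoint of this map for
the Frobenius inner product is `μ ↦ 𝒜*(μ) Y`, so every `𝒜*(μ) Y` is normal to `T_Yℳ`; the normal
equations say that subtracting `𝒜*(μ) Y` from `C Y` leaves a tangent vector.
-/

section

variable {k n m p : ℕ} (A : Fin m → Matrix (Fin n) (Fin n) ℝ)

theorem Aop_add (X Z : Matrix (Fin n) (Fin n) ℝ) : Aop A (X + Z) = Aop A X + Aop A Z := by
  ext i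
  simp [Aop, mul_add]

theorem Aop_sub (X Z : Matrix (Fin n) (Fin n) ℝ) : Aop A (X - Z) = Aop A X - Aop A Z := by
  ext i
  simp [Aop, mul_sub]

theorem Aop_smul (c : ℝ) (X : Matrix (Fin n) (Fin n) ℝ) : Aop A (c • X) = c • Aop A X := by
  ext i
  simp [Aop]

theorem trace_Aadj_mul (μ : Fin m → ℝ) (X : Matrix (Fin n) (Fin n) ℝ) :
    (Aadj A μ * X).trace = μ ⬝ᵥ Aop A X := by
  simp [Aadj, Aop, dotProduct, Matrix.sum_mul, trace_sum]

theorem frobInner_smul_left (c : ℝ) (X Z : Matrix (Fin n) (Fin p) ℝ) :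
    frobInner (c • X) Z = c * frobInner X Z := by
  simp [frobInner]

theorem frobInner_mul_left (B : Matrix (Fin k) (Fin n) ℝ) (Y : Matrix (Fin n) (Fin p) ℝ)
    (Z : Matrix (Fin k) (Fin p) ℝ) :
    frobInner (B * Y) Z = (Bᵀ * (Z * Yᵀ)).trace := by
  rw [frobInner, transpose_mul, Matrix.mul_assoc, trace_mul_comm, Matrix.mul_assoc]

variable {A}

theorem smul_mem_tangentSet {Y Z : Matrix (Fin n) (Fin p) ℝ} (c : ℝ) (hZ : Z ∈ tangentSet A Y) :
    c • Z ∈ tangentSet A Y := by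
  have h_zero : Aop A (Z * Yᵀ + Y * Zᵀ) = 0 := hZ
  change Aop A (c • Z * Yᵀ + Y * (c • Z)ᵀ) = 0
  rw [transpose_smul, Matrix.smul_mul, Matrix.mul_smul, ← smul_add, Aop_smul, h_zero, smul_zero]

theorem isSymm_Aadj (hA : ∀ i, (A i).IsSymm) (μ : Fin m → ℝ) : (Aadj A μ).IsSymm := by
  simp only [IsSymm, Aadj, transpose_sum, transpose_smul, (hA _).eq]

theorem Aop_transpose (hA : ∀ i, (A i).IsSymm) (X : Matrix (Fin n) (Fin n) ℝ) :
    Aop A Xᵀ = Aop A X := by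
  ext i
  calc (A i * Xᵀ).trace = ((A i)ᵀ * Xᵀ).trace := by rw [(hA i).eq]
    _ = (A i * X).trace := trace_transpose_mul (A i) X

theorem mem_tangentSet_iff (hA : ∀ i, (A i).IsSymm) (Y Z : Matrix (Fin n) (Fin p) ℝ) :
    Z ∈ tangentSet A Y ↔ Aop A (Z * Yᵀ) = 0 := by
  have h_double : Aop A (Z * Yᵀ + Y * Zᵀ) = (2 : ℝ) • Aop A (Z * Yᵀ) := by
    rw [Aop_add, ← Aop_transpose hA (Y * Zᵀ), transpose_mul, transpose_transpose, two_smul]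
  rw [tangentSet, Set.mem_ofPred_eq, h_double, smul_eq_zero_iff_right two_ne_zero]

theorem frobInner_Aadj_mul (hA : ∀ i, (A i).IsSymm) (μ : Fin m → ℝ)
    (Y Z : Matrix (Fin n) (Fin p) ℝ) :
    frobInner (Aadj A μ * Y) Z = μ ⬝ᵥ Aop A (Z * Yᵀ) := by
  rw [frobInner_mul_left, (isSymm_Aadj hA μ).eq, trace_Aadj_mul]

theorem frobInner_Aadj_mul_eq_zero (hA : ∀ i, (A i).IsSymm) (μ : Fin m → ℝ)
    {Y Z : Matrix (Fin n) (Fin p) ℝ} (hZ : Z ∈ tangentSet A Y) :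
    frobInner (Aadj A μ * Y) Z = 0 := by
  rw [frobInner_Aadj_mul hA, (mem_tangentSet_iff hA Y Z).1 hZ, dotProduct_zero]

theorem sub_mul_mem_tangentSet_iff (hA : ∀ i, (A i).IsSymm)
    (C B : Matrix (Fin n) (Fin n) ℝ) (Y : Matrix (Fin n) (Fin p) ℝ) :
    (C - B) * Y ∈ tangentSet A Y ↔ Aop A (B * (Y * Yᵀ)) = Aop A (C * (Y * Yᵀ)) := by
  rw [mem_tangentSet_iff hA, Matrix.mul_assoc, Matrix.sub_mul, Aop_sub, sub_eq_zero, eq_comm]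

theorem riemannian_gradient_is_projected_gradient_general (hA : ∀ i, (A i).IsSymm)
    (C : Matrix (Fin n) (Fin n) ℝ) (Y : Matrix (Fin n) (Fin p) ℝ) (μ : Fin m → ℝ)
    (hμ : Aop A (Aadj A μ * (Y * Yᵀ)) = Aop A (C * (Y * Yᵀ))) :
    (2 : ℝ) • ((C - Aadj A μ) * Y) ∈ tangentSet A Y ∧
    ∀ Ydot ∈ tangentSet A Y,
      frobInner ((2 : ℝ) • (C * Y) - (2 : ℝ) • ((C - Aadj A μ) * Y)) Ydot = 0 := by
  have h_tangent : (C - Aadj A μ) * Y ∈ tangentSet A Y :=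
    (sub_mul_mem_tangentSet_iff hA C (Aadj A μ) Y).2 hμ
  have h_normal : (2 : ℝ) • (C * Y) - (2 : ℝ) • ((C - Aadj A μ) * Y) =
      (2 : ℝ) • (Aadj A μ * Y) := by
    rw [← smul_sub, ← Matrix.sub_mul, sub_sub_cancel]
  refine ⟨smul_mem_tangentSet 2 h_tangent, fun Ydot hYdot => ?_⟩
  rw [h_normal, frobInner_smul_left, frobInner_Aadj_mul_eq_zero hA μ hYdot, mul_zero]

end

/-- with `μ` solving the normal equations and `S = C − 𝒜*(μ)`, the matrix
`2SY` lies in `T_Yℳ` and `2CY − 2SY` is Frobenius-orthogonal to `T_Yℳ`; that is, `2SY`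
is the orthogonal projection of `2CY` onto the tangent space — the Riemannian gradient. -/
theorem riemannian_gradient_is_projected_gradient
    (n m p : ℕ) (hn : 0 < n) (hm : 0 < m) (hp : 0 < p)
    (A : Fin m → Matrix (Fin n) (Fin n) ℝ) (hA : ∀ i, (A i).IsSymm) (b : Fin m → ℝ)
    (C : Matrix (Fin n) (Fin n) ℝ) (hC : C.IsSymm)
    (Y : Matrix (Fin n) (Fin p) ℝ) (hY : Y ∈ facFeas A b p)
    (hind : LinearIndependent ℝ (fun i => A i * Y))
    (μ : Fin m → ℝ)
    (hμ : ∀ i, (A i * (Aadj A μ * (Y * Yᵀ))).trace = (A i * (C * (Y * Yᵀ))).trace)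
    (S : Matrix (Fin n) (Fin n) ℝ) (hS : S = C - Aadj A μ) :
    (2 : ℝ) • (S * Y) ∈ tangentSet A Y ∧
    ∀ Ydot ∈ tangentSet A Y,
      frobInner ((2 : ℝ) • (C * Y) - (2 : ℝ) • (S * Y)) Ydot = 0 := by
  subst hS
  exact riemannian_gradient_is_projected_gradient_general hA C Y μ (funext hμ)

end
end
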